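/- Let A = [[1, −1], [1, 1]] be the quincunx matrix and B = Aᵗ. Let ψ ∈ L²(ℝ²) be the function whose Fourier transform \hat{ψ}(ξ₁,ξ₂) = g(|ξ₁|,|ξ₂|), where g is the piecewise linear tent function equal to −1+2x₁+2x₂ on the triangle with vertices (1/2,0),(0,1/2),(1/2,1/2); 2x₂ on the triangle (1/2,0),(1,0),(1/2,1/2); 2x₁ on the triangle (0,1),(0,1/2),(1/2,1/2); 2−2x₁ on the triangle (1,0),(1,1),(1/2,1/2); 2−2x₂ on the triangle (0,1),(1,1),(1/2,1/2); and 0 otherwise. Define φ(x) = (1/4)ψ(x) + (1/4)ψ(A⁻¹x) + (1/8)ψ(A⁻²x). Then ψ and φ generate dual frames {D_{A^j} T_{k/2} ψ : j ∈ ℤ, k ∈ ℤ²} and {D_{A^j} T_{k/2} φ : j ∈ ℤ, k ∈ ℤ²} for L²(ℝ²). -/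

import Mathlib

open MeasureTheory Complex Set
open scoped ENNReal Topology ComplexConjugate Classical

noncomputable section

abbrev ℝn (n : ℕ) := Fin n → ℝ

/-- The Fourier transform `f̂(ξ) = ∫ f(x) e^{-2πi⟨ξ,x⟩} dx` (pointwise integral). -/
def ftrans {n : ℕ} (f : ℝn n → ℂ) (ξ : ℝn n) : ℂ :=
  ∫ x : ℝn n, Complex.exp (-(2 * Real.pi * (∑ i, ξ i * x i)) * Complex.I) * f x

/-- `fhat` is the (L²-) Fourier transform of `f`, characterized by the multiplication
formula against Schwartz functions. -/
def IsFourierPair {n : ℕ} (fhat f : ℝn n → ℂ) : Prop :=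
  ∀ g : SchwartzMap (ℝn n) ℂ,
    ∫ ξ : ℝn n, fhat ξ * g ξ = ∫ x : ℝn n, f x * ftrans (fun y => g y) x

/-- Dilation operator `D_M f(x) = |det M|^{1/2} f(Mx)`. -/
def dila {n : ℕ} (M : Matrix (Fin n) (Fin n) ℝ) (f : ℝn n → ℂ) : ℝn n → ℂ :=
  fun x => (Real.sqrt |M.det| : ℂ) * f (M.mulVec x)

/-- Translation operator `T_y f(x) = f(x - y)`. -/
def tran {n : ℕ} (y : ℝn n) (f : ℝn n → ℂ) : ℝn n → ℂ :=
  fun x => f (x - y)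

/-- Inner product `⟨f, g⟩ = ∫ f ⬝ conj g` of two functions. -/
def ip {n : ℕ} (f g : ℝn n → ℂ) : ℂ := ∫ x : ℝn n, f x * conj (g x)

/-- The element of L² determined by a square-integrable function (junk value `0` otherwise). -/
def toL2 {n : ℕ} (f : ℝn n → ℂ) : Lp ℂ 2 (volume : Measure (ℝn n)) :=
  if h : MemLp f 2 volume then h.toLp f else 0

/-- `F` is a Bessel family with bound `C`. -/
def IsBesselWith {n : ℕ} {ι : Type*} (F : ι → ℝn n → ℂ) (C : ℝ) : Prop :=
  ∀ f : ℝn n → ℂ, MemLp f 2 volume →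
    ∑' i, ((‖ip f (F i)‖₊ : ℝ≥0∞)) ^ 2 ≤ ENNReal.ofReal C * ∫⁻ x, (‖f x‖₊ : ℝ≥0∞) ^ 2

/-- `F` is a frame with bounds `C₁, C₂`. -/
def IsFrameWith {n : ℕ} {ι : Type*} (F : ι → ℝn n → ℂ) (C₁ C₂ : ℝ) : Prop :=
  ∀ f : ℝn n → ℂ, MemLp f 2 volume →
    ENNReal.ofReal C₁ * (∫⁻ x, (‖f x‖₊ : ℝ≥0∞) ^ 2) ≤ ∑' i, ((‖ip f (F i)‖₊ : ℝ≥0∞)) ^ 2 ∧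
    ∑' i, ((‖ip f (F i)‖₊ : ℝ≥0∞)) ^ 2 ≤ ENNReal.ofReal C₂ * ∫⁻ x, (‖f x‖₊ : ℝ≥0∞) ^ 2

/-- Reconstruction property: `f = ∑ᵢ ⟨f, G i⟩ F i` for every `f ∈ L²`. -/
def ReconstructionProp {n : ℕ} {ι : Type*} (F G : ι → ℝn n → ℂ) : Prop :=
  ∀ f : ℝn n → ℂ, MemLp f 2 volume →
    HasSum (fun i => ip f (G i) • toL2 (F i)) (toL2 f)

/-- Two families are dual frames: both are Bessel and the reconstruction formula holds. -/
def AreDualFrames {n : ℕ} {ι : Type*} (F G : ι → ℝn n → ℂ) : Prop :=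
  (∃ C, IsBesselWith F C) ∧ (∃ C, IsBesselWith G C) ∧ ReconstructionProp F G

/-- A real matrix is expansive if all its (complex) eigenvalues have modulus `> 1`. -/
def IsExpansive {n : ℕ} (M : Matrix (Fin n) (Fin n) ℝ) : Prop :=
  ∀ μ : ℂ, (M.map Complex.ofReal).charpoly.IsRoot μ → 1 < ‖μ‖

/-- Integer vector viewed in `ℝⁿ`. -/
def ivec {n : ℕ} (k : Fin n → ℤ) : ℝn n := fun i => (k i : ℝ)

/-- Image of a set under (the linear map given by) a matrix. -/
def mimg {n : ℕ} (M : Matrix (Fin n) (Fin n) ℝ) (S : Set (ℝn n)) : Set (ℝn n) :=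
  (fun x => M.mulVec x) '' S

/-- The wavelet system `{D_{A^j} T_{Pk} ψ}_{j ∈ ℤ, k ∈ ℤⁿ}` with translation lattice `Pℤⁿ`. -/
def waveletSystem {n : ℕ} (A P : Matrix (Fin n) (Fin n) ℝ) (ψ : ℝn n → ℂ) :
    ℤ × (Fin n → ℤ) → ℝn n → ℂ :=
  fun p => dila (A ^ p.1) (tran (P.mulVec (ivec p.2)) ψ)

/-- `E` is a multiplicative tiling set for `{B^j}`. -/
def IsMultTiling {n : ℕ} (B : Matrix (Fin n) (Fin n) ℝ) (E : Set (ℝn n)) : Prop :=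
  0 < volume E ∧ volume (Set.univ \ ⋃ j : ℤ, mimg (B ^ j) E) = 0 ∧
    ∀ j l : ℤ, j ≠ l → volume (mimg (B ^ j) E ∩ mimg (B ^ l) E) = 0

/-- A bounded multiplicative tiling set. -/
def IsBoundedMultTiling {n : ℕ} (B : Matrix (Fin n) (Fin n) ℝ) (E : Set (ℝn n)) : Prop :=
  IsMultTiling B E ∧ Bornology.IsBounded E ∧ (0 : ℝn n) ∉ closure E


/-- The tent-shaped piecewise linear function `g` of Example 2.6, defined on the five
triangles `J₁, …, J₅`. -/
def tentG (x : Fin 2 → ℝ) : ℝ :=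
  if x 0 ≤ 1 / 2 ∧ x 1 ≤ 1 / 2 ∧ 1 / 2 ≤ x 0 + x 1 then -1 + 2 * x 0 + 2 * x 1
  else if 0 ≤ x 1 ∧ 1 / 2 ≤ x 0 ∧ x 0 + x 1 ≤ 1 then 2 * x 1
  else if 0 ≤ x 0 ∧ 1 / 2 ≤ x 1 ∧ x 0 + x 1 ≤ 1 then 2 * x 0
  else if x 0 ≤ 1 ∧ 1 ≤ x 0 + x 1 ∧ x 1 ≤ x 0 then 2 - 2 * x 0
  else if x 1 ≤ 1 ∧ 1 ≤ x 0 + x 1 ∧ x 0 ≤ x 1 then 2 - 2 * x 1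
  else 0

/-- `ψ̂(ξ₁, ξ₂) = g(|ξ₁|, |ξ₂|)`: the mirroring of `g` in the two coordinate axes. -/
def quincunxPsiHat (ξ : Fin 2 → ℝ) : ℝ := tentG (fun i => |ξ i|)

/-! Write `B = Aᵗ`. At each scale the generators are band-limited to a fundamental domain of the
dual lattice, so Parseval's identity for Fourier series turns the sum of `⟨f, Gₖ⟩ ⟨Fₖ, h⟩` over the
translates `k` into an `L²` pairing of `f̂` and `ĥ` multiplied by dilates of the generators' Fourier
transforms. Summing over the scales, the Bessel property follows from bounds on the Calderón sums
`∑ⱼ |ψ̂(Bʲξ)|²` and `∑ⱼ |φ̂(Bʲξ)|²`, and duality from `∑ⱼ ψ̂(Bʲξ) conj (φ̂(Bʲξ)) = 1/4`, the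
covolume of the lattice.

For the tent function, `ψ̂ = Θ - Θ(B·)`, where `Θ` is a cutoff that is radial for the sup norm. As
`φ̂ = (Θ + Θ(B·) - 2 Θ(B³·)) / 4` and its last term vanishes wherever `ψ̂ ≠ 0`, the product
`ψ̂ φ̂ = (Θ² - Θ(B·)²) / 4` telescopes along the scales. -/

section Plancherel

open FourierTransform SchwartzMap

variable {n : ℕ} {f fh g gh : ℝn n → ℂ}

lemma integral_comp_toLp (F : EuclideanSpace ℝ (Fin n) → ℂ) :
    ∫ x : ℝn n, F (WithLp.toLp 2 x) = ∫ x, F x :=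
  (PiLp.volume_preserving_toLp (Fin n)).integral_comp
    (MeasurableEquiv.toLp 2 _).measurableEmbedding F

lemma ftrans_eq_fourier (s : 𝓢(EuclideanSpace ℝ (Fin n), ℂ)) (x : ℝn n) :
    ftrans (fun y => s (WithLp.toLp 2 y)) x = 𝓕 s (WithLp.toLp 2 x) := by
  rw [SchwartzMap.fourier_coe, Real.fourier_eq', ← integral_comp_toLp, ftrans]
  congr with y
  simp [PiLp.inner_apply]

lemma memLp_ftrans (s : 𝓢(ℝn n, ℂ)) : MemLp (ftrans s) 2 volume := by
  let s' := compCLMOfContinuousLinearEquiv ℂ (EuclideanSpace.equiv (Fin n) ℝ) s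
  have h : ftrans s = fun x => 𝓕 s' (WithLp.toLp 2 x) := funext (ftrans_eq_fourier s')
  rw [h]
  exact ((𝓕 s').memLp 2 volume).comp_measurePreserving (PiLp.volume_preserving_toLp (Fin n))

/-- A square-integrable function on `ℝⁿ` as an element of `L²` of Euclidean space. Mathlib's
Plancherel theorem needs an inner product space, whereas `ℝn n` carries the sup norm. -/
def euclideanLift (hf : MemLp f 2 volume) :
    Lp ℂ 2 (volume : Measure (EuclideanSpace ℝ (Fin n))) :=
  (hf.comp_measurePreserving (PiLp.volume_preserving_ofLp (Fin n))).toLp _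

lemma coeFn_euclideanLift (hf : MemLp f 2 volume) :
    euclideanLift hf =ᵐ[volume] fun x => f (WithLp.ofLp x) :=
  MemLp.coeFn_toLp _

lemma inner_euclideanLift (hf : MemLp f 2 volume) (hg : MemLp g 2 volume) :
    inner ℂ (euclideanLift hg) (euclideanLift hf) = ip f g := by
  rw [L2.inner_def, ip, integral_comp_toLp fun x => f (WithLp.ofLp x) * conj (g (WithLp.ofLp x))]
  refine integral_congr_ae ?_
  filter_upwards [coeFn_euclideanLift hf, coeFn_euclideanLift hg] with x hfx hgx
  rw [hfx, hgx, RCLike.inner_apply]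

lemma integral_smul_euclideanLift (hf : MemLp f 2 volume) (s : 𝓢(EuclideanSpace ℝ (Fin n), ℂ)) :
    ∫ x, s x • euclideanLift hf x = ∫ x : ℝn n, f x * s (WithLp.toLp 2 x) := by
  rw [integral_comp_toLp fun x => f (WithLp.ofLp x) * s x]
  refine integral_congr_ae ?_
  filter_upwards [coeFn_euclideanLift hf] with x hx
  rw [hx, smul_eq_mul, mul_comm]

lemma integral_smul_fourier_euclideanLift (hf : MemLp f 2 volume)
    (s : 𝓢(EuclideanSpace ℝ (Fin n), ℂ)) :
    ∫ x, s x • (𝓕 (euclideanLift hf) : Lp ℂ 2 (volume : Measure (EuclideanSpace ℝ (Fin n)))) x =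
      ∫ x : ℝn n, f x * ftrans (fun y => s (WithLp.toLp 2 y)) x := by
  rw [← Lp.toTemperedDistribution_apply, ← Lp.fourier_toTemperedDistribution_eq,
    TemperedDistribution.fourier_apply, Lp.toTemperedDistribution_apply,
    integral_smul_euclideanLift]
  simp_rw [ftrans_eq_fourier]

/-- `f` and `fh` are square-integrable and `fh` is the Fourier transform of `f`. -/
structure IsL2FourierPair (fh f : ℝn n → ℂ) : Prop where
  memLp : MemLp f 2 volume
  hat_memLp : MemLp fh 2 volume
  isFourierPair : IsFourierPair fh f

lemma exists_isL2FourierPair (hf : MemLp f 2 volume) : ∃ fh, IsL2FourierPair fh f := by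
  let F : Lp ℂ 2 (volume : Measure (EuclideanSpace ℝ (Fin n))) := 𝓕 (euclideanLift hf)
  refine ⟨fun x => F (WithLp.toLp 2 x), hf, (Lp.memLp F).comp_measurePreserving
    (PiLp.volume_preserving_toLp (Fin n)), fun s => ?_⟩
  let s' := compCLMOfContinuousLinearEquiv ℂ (EuclideanSpace.equiv (Fin n) ℝ) s
  calc ∫ x : ℝn n, F (WithLp.toLp 2 x) * s x
      = ∫ x : ℝn n, s' (WithLp.toLp 2 x) • F (WithLp.toLp 2 x) := by
        congr with x
        exact mul_comm _ _
    _ = ∫ x, s' x • F x := integral_comp_toLp fun x => s' x • F x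
    _ = ∫ x, f x * ftrans s x := integral_smul_fourier_euclideanLift hf s'

namespace IsL2FourierPair

lemma fourier_euclideanLift (h : IsL2FourierPair fh f) :
    𝓕 (euclideanLift h.memLp) = euclideanLift h.hat_memLp := by
  refine LinearMap.ker_eq_bot.1 (Lp.ker_toTemperedDistributionCLM_eq_bot
    (E := EuclideanSpace ℝ (Fin n)) (F := ℂ) (μ := volume) (p := 2)) ?_
  ext s
  change Lp.toTemperedDistribution (𝓕 (euclideanLift h.memLp)) s =
    Lp.toTemperedDistribution (euclideanLift h.hat_memLp) s
  rw [Lp.toTemperedDistribution_apply, Lp.toTemperedDistribution_apply,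
    integral_smul_fourier_euclideanLift, integral_smul_euclideanLift]
  exact (h.isFourierPair
    (compCLMOfContinuousLinearEquiv ℂ (EuclideanSpace.equiv (Fin n) ℝ).symm s)).symm

lemma ip_eq_ip_hat (hf : IsL2FourierPair fh f) (hg : IsL2FourierPair gh g) :
    ip f g = ip fh gh := by
  rw [← inner_euclideanLift hf.memLp hg.memLp, ← inner_euclideanLift hf.hat_memLp hg.hat_memLp,
    ← hf.fourier_euclideanLift, ← hg.fourier_euclideanLift, Lp.inner_fourier_eq]

lemma add (hf : IsL2FourierPair fh f) (hg : IsL2FourierPair gh g) :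
    IsL2FourierPair (fun ξ => fh ξ + gh ξ) fun x => f x + g x := by
  refine ⟨hf.memLp.add hg.memLp, hf.hat_memLp.add hg.hat_memLp, fun s => ?_⟩
  have hat_integrable {u : ℝn n → ℂ} (hu : MemLp u 2 volume) :
      Integrable fun ξ => u ξ * s ξ := hu.integrable_mul (s.memLp 2)
  have integrable {u : ℝn n → ℂ} (hu : MemLp u 2 volume) :
      Integrable fun x => u x * ftrans s x := hu.integrable_mul (memLp_ftrans s)
  simp_rw [add_mul]
  rw [integral_add (hat_integrable hf.hat_memLp) (hat_integrable hg.hat_memLp),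
    integral_add (integrable hf.memLp) (integrable hg.memLp), hf.isFourierPair s,
    hg.isFourierPair s]

lemma const_mul (hf : IsL2FourierPair fh f) (c : ℂ) :
    IsL2FourierPair (fun ξ => c * fh ξ) fun x => c * f x := by
  refine ⟨hf.memLp.const_mul c, hf.hat_memLp.const_mul c, fun s => ?_⟩
  simp_rw [mul_assoc]
  rw [integral_const_mul, integral_const_mul, hf.isFourierPair s]

end IsL2FourierPair

end Plancherel

section LinearChangeOfVariables

open scoped Matrix

variable {n : ℕ} {M : Matrix (Fin n) (Fin n) ℝ}

lemma mulVec_inv_mulVec (hM : IsUnit M.det) (x : ℝn n) : M *ᵥ (M⁻¹ *ᵥ x) = x := by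
  rw [Matrix.mulVec_mulVec, M.mul_nonsing_inv hM, Matrix.one_mulVec]

lemma inv_mulVec_mulVec (hM : IsUnit M.det) (x : ℝn n) : M⁻¹ *ᵥ (M *ᵥ x) = x := by
  rw [Matrix.mulVec_mulVec, M.nonsing_inv_mul hM, Matrix.one_mulVec]

/-- Multiplication by an invertible matrix as a continuous linear automorphism of `ℝⁿ`. -/
def mulVecCLE (hM : IsUnit M.det) : ℝn n ≃L[ℝ] ℝn n :=
  (Matrix.toLin'OfInv (M.nonsing_inv_mul hM) (M.mul_nonsing_inv hM)).toContinuousLinearEquiv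

lemma mulVecCLE_apply (hM : IsUnit M.det) (x : ℝn n) : mulVecCLE hM x = M *ᵥ x := by
  simp [mulVecCLE, Matrix.toLin'OfInv]

lemma measurableEmbedding_mulVec (hM : IsUnit M.det) :
    MeasurableEmbedding fun x : ℝn n => M *ᵥ x := by
  simp_rw [← mulVecCLE_apply hM]
  exact (mulVecCLE hM).toHomeomorph.measurableEmbedding

lemma map_mulVec_volume (hM : IsUnit M.det) :
    Measure.map (fun x : ℝn n => M *ᵥ x) volume = ENNReal.ofReal |M.det|⁻¹ • volume := by
  rw [← abs_inv]
  exact Real.map_matrix_volume_pi_eq_smul_volume_pi hM.ne_zero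

lemma integral_comp_mulVec {E : Type*} [NormedAddCommGroup E] [NormedSpace ℝ E]
    (hM : IsUnit M.det) (F : ℝn n → E) : ∫ x, F (M *ᵥ x) = |M.det|⁻¹ • ∫ x, F x := by
  rw [← (measurableEmbedding_mulVec hM).integral_map, map_mulVec_volume hM,
    integral_smul_measure, ENNReal.toReal_ofReal (by positivity)]

lemma memLp_comp_mulVec {E : Type*} [NormedAddCommGroup E] {p : ℝ≥0∞} {F : ℝn n → E}
    (hF : MemLp F p volume) (hM : IsUnit M.det) : MemLp (fun x => F (M *ᵥ x)) p volume := by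
  refine (measurableEmbedding_mulVec hM).memLp_map_measure_iff.1 ?_
  rw [map_mulVec_volume hM]
  exact hF.smul_measure ENNReal.ofReal_ne_top

end LinearChangeOfVariables

section PlaneWave

open scoped Matrix

variable {n : ℕ}

/-- The plane wave `x ↦ e^{-2πi⟨y,x⟩}`, the kernel of `ftrans`. -/
def planeWave (y x : ℝn n) : ℂ :=
  Complex.exp (-(2 * Real.pi * (∑ i, y i * x i)) * Complex.I)

lemma norm_planeWave (y x : ℝn n) : ‖planeWave y x‖ = 1 := by
  rw [planeWave, ← Complex.norm_exp_ofReal_mul_I (-(2 * Real.pi * ∑ i, y i * x i))]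
  push_cast
  rfl

lemma planeWave_add_left (y z x : ℝn n) :
    planeWave (y + z) x = planeWave y x * planeWave z x := by
  rw [planeWave, planeWave, planeWave, ← Complex.exp_add]
  congr 1
  simp only [Pi.add_apply, ofReal_add, add_mul, Finset.sum_add_distrib]
  ring

lemma continuous_planeWave (y : ℝn n) : Continuous (planeWave y) := by
  unfold planeWave
  fun_prop

lemma planeWave_mulVec_left (M : Matrix (Fin n) (Fin n) ℝ) (y x : ℝn n) :
    planeWave (M *ᵥ y) x = planeWave y (Mᵀ *ᵥ x) := by
  have h : ∑ i, (M *ᵥ y) i * x i = ∑ i, y i * (Mᵀ *ᵥ x) i := by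
    change (M *ᵥ y) ⬝ᵥ x = y ⬝ᵥ (Mᵀ *ᵥ x)
    rw [dotProduct_comm, Matrix.dotProduct_mulVec, Matrix.mulVec_transpose, dotProduct_comm]
  rw [planeWave, planeWave, h]

lemma memLp_planeWave_mul (y : ℝn n) {p : ℝ≥0∞} {f : ℝn n → ℂ} (hf : MemLp f p volume) :
    MemLp (fun x => planeWave y x * f x) p volume :=
  hf.of_le ((continuous_planeWave y).aestronglyMeasurable.mul hf.1)
    (.of_forall fun x => by rw [norm_mul, norm_planeWave, one_mul])

lemma iteratedDeriv_cexp_ofReal_mul_I (k : ℕ) :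
    iteratedDeriv k (fun t : ℝ => Complex.exp (t * Complex.I)) =
      fun t : ℝ => Complex.I ^ k * Complex.exp (t * Complex.I) := by
  induction k with
  | zero => simp
  | succ k ih =>
    rw [iteratedDeriv_succ, ih]
    ext t
    have hderiv : HasDerivAt (fun t : ℝ => (t : ℂ) * Complex.I) Complex.I t := by
      simpa using (Complex.ofRealCLM.hasDerivAt (x := t)).mul_const Complex.I
    rw [(hderiv.cexp.const_mul (Complex.I ^ k)).deriv]
    ring

lemma hasTemperateGrowth_cexp_ofReal_mul_I :
    Function.HasTemperateGrowth fun t : ℝ => Complex.exp (t * Complex.I) := by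
  refine ⟨(Complex.ofRealCLM.contDiff.mul contDiff_const).cexp, fun k => ⟨0, 1, fun t => ?_⟩⟩
  rw [norm_iteratedFDeriv_eq_norm_iteratedDeriv, iteratedDeriv_cexp_ofReal_mul_I]
  simp [Complex.norm_exp_ofReal_mul_I]

lemma hasTemperateGrowth_planeWave (y : ℝn n) :
    Function.HasTemperateGrowth (planeWave y) := by
  let L : ℝn n →L[ℝ] ℝ := ∑ i, (-(2 * Real.pi * y i)) • ContinuousLinearMap.proj (R := ℝ) i
  have hL : planeWave y = (fun t : ℝ => Complex.exp (t * Complex.I)) ∘ L := by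
    ext x
    simp [planeWave, L, Finset.mul_sum, mul_assoc]
  rw [hL]
  exact hasTemperateGrowth_cexp_ofReal_mul_I.comp L.hasTemperateGrowth

end PlaneWave

section FourierPairOperators

open SchwartzMap
open scoped Matrix

variable {n : ℕ} {f fh g : ℝn n → ℂ} {M : Matrix (Fin n) (Fin n) ℝ}

lemma ftrans_planeWave_mul (y ξ : ℝn n) :
    ftrans (fun x => planeWave y x * f x) ξ = ftrans f (ξ + y) := by
  change ∫ x, planeWave ξ x * (planeWave y x * f x) = ∫ x, planeWave (ξ + y) x * f x
  simp_rw [planeWave_add_left, mul_assoc]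

lemma ftrans_comp_mulVec (hM : IsUnit M.det) (ξ : ℝn n) :
    ftrans (fun x => f (M *ᵥ x)) (Mᵀ *ᵥ ξ) = (|M.det|⁻¹ : ℝ) * ftrans f ξ := by
  change ∫ x, planeWave (Mᵀ *ᵥ ξ) x * f (M *ᵥ x) = _ * ∫ x, planeWave ξ x * f x
  simp_rw [planeWave_mulVec_left, Matrix.transpose_transpose]
  rw [integral_comp_mulVec hM fun x => planeWave ξ x * f x, Complex.real_smul]

lemma isUnit_det_transpose_inv (hM : IsUnit M.det) : IsUnit (Mᵀ⁻¹).det :=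
  Matrix.isUnit_nonsing_inv_det _ (Matrix.isUnit_det_transpose M hM)

lemma abs_det_transpose_inv : |(Mᵀ⁻¹).det| = |M.det|⁻¹ := by
  rw [Matrix.det_nonsing_inv, Matrix.det_transpose, Ring.inverse_eq_inv', abs_inv]

lemma memLp_tran {p : ℝ≥0∞} (y : ℝn n) (hf : MemLp f p volume) : MemLp (tran y f) p volume :=
  hf.comp_measurePreserving (measurePreserving_sub_right volume y)

lemma memLp_dila {p : ℝ≥0∞} (hM : IsUnit M.det) (hf : MemLp f p volume) :
    MemLp (dila M f) p volume :=
  (memLp_comp_mulVec hf hM).const_mul _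

lemma ip_dila_dila (hM : IsUnit M.det) : ip (dila M f) (dila M g) = ip f g := by
  calc ip (dila M f) (dila M g)
      = ∫ x, |M.det| • (f (M *ᵥ x) * conj (g (M *ᵥ x))) := by
        unfold ip dila
        congr with x
        rw [map_mul, conj_ofReal, mul_mul_mul_comm, ← ofReal_mul,
          Real.mul_self_sqrt (abs_nonneg _), Complex.real_smul]
    _ = ip f g := by
        rw [integral_smul, integral_comp_mulVec hM fun x => f x * conj (g x), smul_smul,
          mul_inv_cancel₀ (abs_ne_zero.2 hM.ne_zero), one_smul, ip]

lemma dila_dila_inv (hM : IsUnit M.det) : dila M (dila M⁻¹ f) = f := by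
  ext x
  have hdet : √|M.det| * √|M⁻¹.det| = 1 := by
    rw [← Real.sqrt_mul (abs_nonneg _), ← abs_mul, ← Matrix.det_mul, M.mul_nonsing_inv hM]
    simp
  simp only [dila]
  rw [inv_mulVec_mulVec hM, ← mul_assoc, ← ofReal_mul, hdet, ofReal_one, one_mul]

lemma ip_dila_right (hM : IsUnit M.det) : ip f (dila M g) = ip (dila M⁻¹ f) g := by
  rw [← ip_dila_dila (f := dila M⁻¹ f) hM, dila_dila_inv hM]

namespace IsL2FourierPair

lemma tran (h : IsL2FourierPair fh f) (y : ℝn n) :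
    IsL2FourierPair (fun ξ => planeWave y ξ * fh ξ) (tran y f) := by
  refine ⟨memLp_tran y h.memLp, memLp_planeWave_mul y h.hat_memLp, fun s => ?_⟩
  let s' : 𝓢(ℝn n, ℂ) := smulLeftCLM ℂ (planeWave y) s
  have hs' : ⇑s' = fun x => planeWave y x * s x := funext fun x =>
    smulLeftCLM_apply_apply (hasTemperateGrowth_planeWave y) s x
  calc ∫ ξ, planeWave y ξ * fh ξ * s ξ
      = ∫ ξ, fh ξ * s' ξ := by
        simp_rw [hs', mul_left_comm (fh _), mul_assoc]
    _ = ∫ x, f x * ftrans s (x + y) := by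
        simp_rw [h.isFourierPair s', hs', ftrans_planeWave_mul]
    _ = ∫ x, f (x - y) * ftrans s x := by
        rw [← integral_sub_right_eq_self _ y]
        simp_rw [sub_add_cancel]

lemma comp_mulVec (h : IsL2FourierPair fh f) (hM : IsUnit M.det) :
    IsL2FourierPair (fun ξ => (|M.det|⁻¹ : ℝ) * fh (Mᵀ⁻¹ *ᵥ ξ)) fun x => f (M *ᵥ x) := by
  have hMt : IsUnit Mᵀ.det := Matrix.isUnit_det_transpose M hM
  refine ⟨memLp_comp_mulVec h.memLp hM,
    (memLp_comp_mulVec h.hat_memLp (isUnit_det_transpose_inv hM)).const_mul _, fun s => ?_⟩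
  let s' : 𝓢(ℝn n, ℂ) := compCLMOfContinuousLinearEquiv ℂ (mulVecCLE hMt) s
  have hs' : ⇑s' = fun x => s (Mᵀ *ᵥ x) := funext fun x => by
    simp [s', mulVecCLE_apply]
  calc ∫ ξ, (|M.det|⁻¹ : ℝ) * fh (Mᵀ⁻¹ *ᵥ ξ) * s ξ
      = |M.det|⁻¹ • ∫ ξ, (fun η => fh η * s' η) (Mᵀ⁻¹ *ᵥ ξ) := by
        simp_rw [hs', mulVec_inv_mulVec hMt, mul_assoc]
        rw [integral_const_mul, Complex.real_smul]
    _ = ∫ x, f x * ftrans s' x := by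
        rw [integral_comp_mulVec (isUnit_det_transpose_inv hM) fun η => fh η * s' η,
          h.isFourierPair s', abs_det_transpose_inv, smul_smul, inv_inv,
          inv_mul_cancel₀ (abs_ne_zero.2 hM.ne_zero), one_smul]
    _ = |M.det| • ∫ x, f (M *ᵥ x) * ftrans s' (M *ᵥ x) := by
        rw [integral_comp_mulVec hM fun x => f x * ftrans s' x, smul_smul,
          mul_inv_cancel₀ (abs_ne_zero.2 hM.ne_zero), one_smul]
    _ = ∫ x, f (M *ᵥ x) * ftrans s x := by
        rw [← integral_smul]
        congr with x
        have := ftrans_comp_mulVec (f := s) hMt x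
        rw [Matrix.transpose_transpose, Matrix.det_transpose] at this
        rw [hs', this, ← Complex.real_smul, mul_smul_comm, smul_smul,
          mul_inv_cancel₀ (abs_ne_zero.2 hM.ne_zero), one_smul]

lemma dila (h : IsL2FourierPair fh f) (hM : IsUnit M.det) :
    IsL2FourierPair (dila Mᵀ⁻¹ fh) (dila M f) := by
  convert (h.comp_mulVec hM).const_mul √|M.det| using 1
  · ext ξ
    rw [_root_.dila, abs_det_transpose_inv, ← mul_assoc, ← ofReal_mul, Real.sqrt_inv,
      ← div_eq_mul_inv √|M.det|, Real.sqrt_div_self', one_div]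
  · rfl

end IsL2FourierPair

end FourierPairOperators

section UnitCube

variable {n : ℕ} {u v : ℝn n → ℂ}

/-- Normalized Haar measure, with respect to which Mathlib states Fourier series on the torus. -/
local instance : MeasureSpace UnitAddCircle := ⟨AddCircle.haarAddCircle⟩

/-- The half-open unit cube `(-1/2, 1/2]ⁿ`, a fundamental domain for `ℤⁿ`. -/
def unitCube (n : ℕ) : Set (ℝn n) := {x | ∀ i, x i ∈ Ioc (-1 / 2 : ℝ) (-1 / 2 + 1)}

lemma measurableSet_unitCube : MeasurableSet (unitCube n) :=
  MeasurableSet.univ_pi' fun _ => measurableSet_Ioc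

/-- The restriction of `u` to the unit cube, extended `ℤⁿ`-periodically and viewed on the torus. -/
def periodize (u : ℝn n → ℂ) : UnitAddTorus (Fin n) → ℂ :=
  fun t => u (UnitAddTorus.measurableEquivPiIoc (fun _ => (-1 / 2 : ℝ)) t).1

lemma periodize_coe (u : ℝn n → ℂ) {x : ℝn n} (hx : x ∈ unitCube n) :
    periodize u (fun i => (x i : UnitAddCircle)) = u x := by
  have h := (UnitAddTorus.measurableEquivPiIoc fun _ : Fin n => (-1 / 2 : ℝ)).apply_symm_apply
    ⟨x, hx⟩
  rw [UnitAddTorus.coe_symm_measurableEquivPiIoc_apply] at h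
  rw [periodize, h]

lemma memLp_periodize {p : ℝ≥0∞} (hu : MemLp u p volume) : MemLp (periodize u) p volume := by
  have hcube : MemLp (fun x : unitCube n => u x) p (Measure.comap Subtype.val volume) := by
    refine (MeasurableEmbedding.subtype_coe measurableSet_unitCube).memLp_map_measure_iff.1 ?_
    rw [map_comap_subtype_coe measurableSet_unitCube]
    exact hu.restrict _
  exact hcube.comp_measurePreserving (UnitAddTorus.measurePreserving_equivPiIoc fun _ => -1 / 2)

lemma integral_periodize (hu : Function.support u ⊆ unitCube n) :
    ∫ t, periodize u t = ∫ x, u x := by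
  rw [UnitAddTorus.integral_preimage (periodize u) fun _ => -1 / 2]
  change ∫ x in unitCube n, _ = _
  rw [setIntegral_congr_fun measurableSet_unitCube fun x hx => periodize_coe u hx,
    setIntegral_eq_integral_of_forall_compl_eq_zero fun x hx => by_contra fun h => hx (hu h)]

lemma mFourier_neg_coe (k : Fin n → ℤ) (x : ℝn n) :
    UnitAddTorus.mFourier (-k) (fun i => (x i : UnitAddCircle)) = planeWave (ivec k) x := by
  simp only [UnitAddTorus.mFourier, ContinuousMap.coe_mk, fourier_coe_apply, planeWave, ivec,
    ← Complex.exp_sum]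
  congr 1
  push_cast
  simp only [Pi.neg_apply, Finset.mul_sum, ← Finset.sum_neg_distrib, Finset.sum_mul]
  refine Finset.sum_congr rfl fun i _ => ?_
  push_cast
  ring

lemma mFourier_neg_mul_periodize (k : Fin n → ℤ) (t : UnitAddTorus (Fin n)) :
    UnitAddTorus.mFourier (-k) t * periodize u t =
      periodize (fun x => planeWave (ivec k) x * u x) t := by
  have h := (UnitAddTorus.measurableEquivPiIoc fun _ : Fin n => (-1 / 2 : ℝ)).symm_apply_apply t
  rw [UnitAddTorus.coe_symm_measurableEquivPiIoc_apply] at h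
  rw [periodize, periodize, ← mFourier_neg_coe, h]

lemma mFourierCoeff_periodize (hu : Function.support u ⊆ unitCube n) (k : Fin n → ℤ) :
    UnitAddTorus.mFourierCoeff (periodize u) k = ftrans u (ivec k) := by
  simp_rw [UnitAddTorus.mFourierCoeff, smul_eq_mul, mFourier_neg_mul_periodize]
  exact integral_periodize fun x hx => hu (right_ne_zero_of_mul hx)

lemma hasSum_ftrans_ivec_mul_conj (hu : MemLp u 2 volume) (hv : MemLp v 2 volume)
    (hu' : Function.support u ⊆ unitCube n) (hv' : Function.support v ⊆ unitCube n) :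
    HasSum (fun k => ftrans u (ivec k) * conj (ftrans v (ivec k))) (ip u v) := by
  have hsum := UnitAddTorus.hasSum_prod_mFourierCoeff
    ((memLp_periodize hv).toLp (periodize v)) ((memLp_periodize hu).toLp (periodize u))
  have hcoeff {w : ℝn n → ℂ} (hw : MemLp w 2 volume) (hw' : Function.support w ⊆ unitCube n)
      (k : Fin n → ℤ) :
      UnitAddTorus.mFourierCoeff ((memLp_periodize hw).toLp (periodize w)) k =
        ftrans w (ivec k) := by
    rw [← mFourierCoeff_periodize hw' k]
    exact integral_congr_ae ((memLp_periodize hw).coeFn_toLp.mono fun t ht => by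
      simp only [ht])
  have hip : ∫ t, conj ((memLp_periodize hv).toLp (periodize v) t) *
      (memLp_periodize hu).toLp (periodize u) t = ip u v := by
    rw [ip, ← integral_periodize (u := fun x => u x * conj (v x))
      fun x hx => hu' (left_ne_zero_of_mul hx)]
    refine integral_congr_ae ?_
    filter_upwards [(memLp_periodize hu).coeFn_toLp, (memLp_periodize hv).coeFn_toLp]
      with t htu htv
    rw [htu, htv, mul_comm]
    rfl
  rw [hip] at hsum
  simpa only [hcoeff hu hu', hcoeff hv hv', mul_comm] using hsum

end UnitCube

section BandlimitedTranslates

open scoped Matrix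

variable {n : ℕ} {P : Matrix (Fin n) (Fin n) ℝ} {u v : ℝn n → ℂ}

lemma ip_comp_mulVec (hP : IsUnit P.det) :
    ip (fun x => u (P *ᵥ x)) (fun x => v (P *ᵥ x)) = |P.det|⁻¹ • ip u v :=
  integral_comp_mulVec hP fun x => u x * conj (v x)

lemma ftrans_mulVec (hP : IsUnit P.det) (ξ : ℝn n) :
    ftrans u (P *ᵥ ξ) = (|P.det|⁻¹ : ℝ) * ftrans (fun x => u (Pᵀ⁻¹ *ᵥ x)) ξ := by
  have h := ftrans_comp_mulVec (f := u) (isUnit_det_transpose_inv hP) (P *ᵥ ξ)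
  rw [abs_det_transpose_inv, inv_inv, Matrix.transpose_nonsing_inv, Matrix.transpose_transpose,
    inv_mulVec_mulVec hP] at h
  rw [h, ← mul_assoc, ← ofReal_mul, inv_mul_cancel₀ (abs_ne_zero.2 hP.ne_zero), ofReal_one,
    one_mul]

lemma hasSum_ftrans_lattice_mul_conj (hP : IsUnit P.det) (hu : MemLp u 2 volume)
    (hv : MemLp v 2 volume) (hu' : ∀ x, u x ≠ 0 → Pᵀ *ᵥ x ∈ unitCube n)
    (hv' : ∀ x, v x ≠ 0 → Pᵀ *ᵥ x ∈ unitCube n) :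
    HasSum (fun k => ftrans u (P *ᵥ ivec k) * conj (ftrans v (P *ᵥ ivec k)))
      (|P.det|⁻¹ • ip u v) := by
  have hM := isUnit_det_transpose_inv hP
  have support_comp {w : ℝn n → ℂ} (hw : ∀ x, w x ≠ 0 → Pᵀ *ᵥ x ∈ unitCube n) :
      Function.support (fun x => w (Pᵀ⁻¹ *ᵥ x)) ⊆ unitCube n := fun x hx => by
    simpa [mulVec_inv_mulVec (Matrix.isUnit_det_transpose P hP)] using hw _ hx
  have hsum := (hasSum_ftrans_ivec_mul_conj (memLp_comp_mulVec hu hM) (memLp_comp_mulVec hv hM)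
    (support_comp hu') (support_comp hv')).const_smul (|P.det|⁻¹ * |P.det|⁻¹)
  rw [ip_comp_mulVec hM, abs_det_transpose_inv, inv_inv, smul_smul, mul_assoc,
    inv_mul_cancel₀ (abs_ne_zero.2 hP.ne_zero), mul_one] at hsum
  refine hsum.congr_fun fun k => ?_
  rw [ftrans_mulVec hP, ftrans_mulVec hP, map_mul, conj_ofReal, mul_mul_mul_comm, ← ofReal_mul,
    Complex.real_smul]

end BandlimitedTranslates

section BesselSynthesis

variable {H ι : Type*} [NormedAddCommGroup H] [InnerProductSpace ℂ H] {F : ι → H} {C : ℝ}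

lemma norm_sum_smul_sq_le_of_bessel (hC : 0 ≤ C) {s : Finset ι}
    (hF : ∀ w, ∑ i ∈ s, ‖inner ℂ (F i) w‖ ^ 2 ≤ C * ‖w‖ ^ 2) (c : ι → ℂ) :
    ‖∑ i ∈ s, c i • F i‖ ^ 2 ≤ C * ∑ i ∈ s, ‖c i‖ ^ 2 := by
  set w := ∑ i ∈ s, c i • F i with hw
  have hnorm : ‖w‖ ^ 2 ≤ ∑ i ∈ s, ‖c i‖ * ‖inner ℂ (F i) w‖ := by
    calc ‖w‖ ^ 2 = ‖∑ i ∈ s, inner ℂ (c i • F i) w‖ := by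
          rw [← sum_inner, ← hw, inner_self_eq_norm_sq_to_K]
          simp
      _ ≤ ∑ i ∈ s, ‖inner ℂ (c i • F i) w‖ := norm_sum_le _ _
      _ = ∑ i ∈ s, ‖c i‖ * ‖inner ℂ (F i) w‖ := by
          simp_rw [inner_smul_left, norm_mul, RCLike.norm_conj]
  have hsq : ‖w‖ ^ 2 * ‖w‖ ^ 2 ≤ (C * ∑ i ∈ s, ‖c i‖ ^ 2) * ‖w‖ ^ 2 := by
    calc ‖w‖ ^ 2 * ‖w‖ ^ 2 ≤ (∑ i ∈ s, ‖c i‖ * ‖inner ℂ (F i) w‖) ^ 2 := by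
          rw [← sq]
          gcongr
      _ ≤ (∑ i ∈ s, ‖c i‖ ^ 2) * ∑ i ∈ s, ‖inner ℂ (F i) w‖ ^ 2 :=
          Finset.sum_mul_sq_le_sq_mul_sq s _ _
      _ ≤ (∑ i ∈ s, ‖c i‖ ^ 2) * (C * ‖w‖ ^ 2) := by
          gcongr
          exact hF w
      _ = (C * ∑ i ∈ s, ‖c i‖ ^ 2) * ‖w‖ ^ 2 := by ring
  rcases (sq_nonneg ‖w‖).eq_or_lt with hzero | hpos
  · rw [← hzero]
    positivity
  · exact le_of_mul_le_mul_right hsq hpos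

lemma summable_smul_of_bessel [CompleteSpace H] (hC : 0 ≤ C)
    (hF : ∀ w (s : Finset ι), ∑ i ∈ s, ‖inner ℂ (F i) w‖ ^ 2 ≤ C * ‖w‖ ^ 2) {c : ι → ℂ}
    (hc : Summable fun i => ‖c i‖ ^ 2) : Summable fun i => c i • F i := by
  rw [summable_iff_vanishing_norm]
  intro ε hε
  obtain ⟨s, hs⟩ := summable_iff_vanishing_norm.1 hc (ε ^ 2 / (C + 1)) (by positivity)
  refine ⟨s, fun t ht => lt_of_pow_lt_pow_left₀ 2 hε.le ?_⟩
  have htail := hs t ht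
  rw [Real.norm_of_nonneg (by positivity), lt_div_iff₀ (by positivity)] at htail
  calc ‖∑ i ∈ t, c i • F i‖ ^ 2 ≤ C * ∑ i ∈ t, ‖c i‖ ^ 2 :=
        norm_sum_smul_sq_le_of_bessel hC (fun w => hF w t) c
    _ ≤ (∑ i ∈ t, ‖c i‖ ^ 2) * (C + 1) := by
        rw [mul_comm]
        gcongr
        linarith
    _ < ε ^ 2 := htail

end BesselSynthesis

section DualFrames

variable {n : ℕ} {ι : Type*} {f g h fh : ℝn n → ℂ} {F G : ι → ℝn n → ℂ} {C D : ℝ}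

lemma toL2_eq_toLp (hf : MemLp f 2 volume) : toL2 f = hf.toLp f :=
  dif_pos hf

lemma toL2_coeFn (w : Lp ℂ 2 (volume : Measure (ℝn n))) : toL2 (w : ℝn n → ℂ) = w := by
  rw [toL2_eq_toLp (Lp.memLp w), Lp.toLp_coeFn]

lemma inner_toL2 (hf : MemLp f 2 volume) (hg : MemLp g 2 volume) :
    inner ℂ (toL2 g) (toL2 f) = ip f g := by
  rw [toL2_eq_toLp hf, toL2_eq_toLp hg, L2.inner_def, ip]
  refine integral_congr_ae ?_
  filter_upwards [hf.coeFn_toLp, hg.coeFn_toLp] with x hfx hgx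
  rw [hfx, hgx, RCLike.inner_apply]

lemma ip_self (hf : MemLp f 2 volume) : ip f f = (‖toL2 f‖ ^ 2 : ℝ) := by
  rw [← inner_toL2 hf hf, inner_self_eq_norm_sq_to_K]
  norm_cast

lemma lintegral_enorm_sq (hf : MemLp f 2 volume) :
    ∫⁻ x, ‖f x‖ₑ ^ 2 = ENNReal.ofReal (‖toL2 f‖ ^ 2) := by
  rw [ENNReal.ofReal_pow (norm_nonneg _), ofReal_norm, toL2_eq_toLp hf, Lp.enorm_toLp]
  simpa using (eLpNorm_nnreal_pow_eq_lintegral (f := f) (μ := volume) (p := 2) two_ne_zero).symm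

lemma IsL2FourierPair.lintegral_enorm_sq_eq (hf : IsL2FourierPair fh f) :
    ∫⁻ ξ, ‖fh ξ‖ₑ ^ 2 = ∫⁻ x, ‖f x‖ₑ ^ 2 := by
  have hip := hf.ip_eq_ip_hat hf
  rw [ip_self hf.memLp, ip_self hf.hat_memLp, ofReal_inj] at hip
  rw [lintegral_enorm_sq hf.memLp, lintegral_enorm_sq hf.hat_memLp, hip]

lemma tsum_enorm_sq_of_hasSum {c : ι → ℂ} {r : ℝ} (hc : HasSum (fun i => c i * conj (c i)) r) :
    ∑' i, ‖c i‖ₑ ^ 2 = ENNReal.ofReal r := by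
  simp_rw [Complex.mul_conj, Complex.normSq_eq_norm_sq, Complex.hasSum_ofReal] at hc
  rw [← hc.tsum_eq, ENNReal.ofReal_tsum_of_nonneg (fun i => by positivity) hc.summable]
  simp_rw [ENNReal.ofReal_pow (norm_nonneg _), ofReal_norm]

namespace IsBesselWith

lemma sum_norm_ip_sq_le (hF : IsBesselWith F C) (hf : MemLp f 2 volume) (s : Finset ι) :
    ∑ i ∈ s, ‖ip f (F i)‖ ^ 2 ≤ C.toNNReal * ‖toL2 f‖ ^ 2 := by
  rw [← ENNReal.ofReal_le_ofReal_iff (by positivity), ENNReal.ofReal_mul (by positivity),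
    ← lintegral_enorm_sq hf, ENNReal.ofReal_sum_of_nonneg (fun i _ => by positivity)]
  simp_rw [ENNReal.ofReal_pow (norm_nonneg _), ofReal_norm, ENNReal.ofReal_coe_nnreal]
  exact (ENNReal.sum_le_tsum s).trans (hF f hf)

lemma summable_norm_ip_sq (hF : IsBesselWith F C) (hf : MemLp f 2 volume) :
    Summable fun i => ‖ip f (F i)‖ ^ 2 :=
  summable_of_sum_le (fun _ => by positivity) fun s => hF.sum_norm_ip_sq_le hf s

lemma summable_smul_toL2 (hF : IsBesselWith F C) (hF' : ∀ i, MemLp (F i) 2 volume) {c : ι → ℂ}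
    (hc : Summable fun i => ‖c i‖ ^ 2) : Summable fun i => c i • toL2 (F i) := by
  refine summable_smul_of_bessel C.toNNReal.coe_nonneg (fun w s => ?_) hc
  have hw := hF.sum_norm_ip_sq_le (Lp.memLp w) s
  simp_rw [← inner_toL2 (Lp.memLp w) (hF' _), toL2_coeFn] at hw
  exact hw

end IsBesselWith

lemma inner_toL2_smul (hg : MemLp g 2 volume) (hh : MemLp h 2 volume) (c : ℂ) :
    inner ℂ (toL2 h) (c • toL2 g) = c * conj (ip h g) := by
  rw [inner_smul_right, ← inner_conj_symm, inner_toL2 hh hg]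

lemma summable_ip_mul_conj_ip (hF : IsBesselWith F C) (hG : IsBesselWith G D)
    (hF' : ∀ i, MemLp (F i) 2 volume) (hf : MemLp f 2 volume) (hh : MemLp h 2 volume) :
    Summable fun i => ip f (G i) * conj (ip h (F i)) := by
  simpa only [innerSL_apply_apply, inner_toL2_smul (hF' _) hh] using
    (hF.summable_smul_toL2 hF' (hG.summable_norm_ip_sq hf)).mapL (innerSL ℂ (toL2 h))

lemma reconstructionProp_of_tsum_ip (hF : IsBesselWith F C) (hG : IsBesselWith G D)
    (hF' : ∀ i, MemLp (F i) 2 volume)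
    (hFG : ∀ f h : ℝn n → ℂ, MemLp f 2 volume → MemLp h 2 volume →
      ∑' i, ip f (G i) * conj (ip h (F i)) = ip f h) :
    ReconstructionProp F G := by
  intro f hf
  have hsum := hF.summable_smul_toL2 hF' (hG.summable_norm_ip_sq hf)
  convert hsum.hasSum using 1
  refine ext_inner_left ℂ fun w => ?_
  rw [← toL2_coeFn w, inner_toL2 hf (Lp.memLp w), ← hFG f w hf (Lp.memLp w),
    ← innerSL_apply_apply ℂ _ (∑' i, _), ContinuousLinearMap.map_tsum _ hsum]
  simp_rw [innerSL_apply_apply, inner_toL2_smul (hF' _) (Lp.memLp w)]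

end DualFrames

section WaveletSystems

open scoped Matrix

variable {n : ℕ} {A M P : Matrix (Fin n) (Fin n) ℝ} {f fh g gh a α b β : ℝn n → ℂ} {K L : ℝ}

lemma conj_planeWave (y x : ℝn n) : conj (planeWave y x) = planeWave (-y) x := by
  rw [planeWave, planeWave, ← Complex.exp_conj]
  congr 1
  simp [Finset.sum_neg_distrib, ← Complex.ofReal_ofNat]

lemma ip_tran_eq_ftrans (hf : IsL2FourierPair fh f) (hα : IsL2FourierPair a α) (y : ℝn n) :
    ip f (tran y α) = ftrans (fun ξ => fh ξ * conj (a ξ)) (-y) := by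
  rw [hf.ip_eq_ip_hat (hα.tran y)]
  change _ = ∫ ξ, planeWave (-y) ξ * (fh ξ * conj (a ξ))
  simp_rw [ip, map_mul, conj_planeWave, mul_left_comm (fh _)]

lemma memLp_mul_conj (hf : MemLp fh 2 volume) (ha : MemLp a ⊤ volume) :
    MemLp (fun ξ => fh ξ * conj (a ξ)) 2 volume :=
  ha.star.mul' hf

/-- `α` has the essentially bounded Fourier transform `a`, supported in a fundamental domain of the
lattice dual to `Pℤⁿ`; this makes the translates of `α` along `Pℤⁿ` a windowed Fourier system. -/
structure IsBandlimited (P : Matrix (Fin n) (Fin n) ℝ) (a α : ℝn n → ℂ) : Prop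
    extends IsL2FourierPair a α where
  hat_memLp_top : MemLp a ⊤ volume
  mem_unitCube : ∀ ξ, a ξ ≠ 0 → Pᵀ *ᵥ ξ ∈ unitCube n

lemma IsBandlimited.mem_unitCube_of_mul_conj_ne_zero (hα : IsBandlimited P a α) {ξ : ℝn n}
    (hξ : fh ξ * conj (a ξ) ≠ 0) : Pᵀ *ᵥ ξ ∈ unitCube n :=
  hα.mem_unitCube ξ fun h0 => hξ (by rw [h0, map_zero, mul_zero])

lemma hasSum_ip_tran_mul_conj (hP : IsUnit P.det) (hα : IsBandlimited P a α)
    (hβ : IsBandlimited P b β) (hf : IsL2FourierPair fh f) (hg : IsL2FourierPair gh g) :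
    HasSum (fun k => ip f (tran (P *ᵥ ivec k) β) * conj (ip g (tran (P *ᵥ ivec k) α)))
      (|P.det|⁻¹ • ip (fun ξ => fh ξ * conj (b ξ)) fun ξ => gh ξ * conj (a ξ)) := by
  rw [← (Equiv.neg _).hasSum_iff]
  have ivec_neg (k : Fin n → ℤ) : -(P *ᵥ ivec (-k)) = P *ᵥ ivec k := by
    rw [← Matrix.mulVec_neg]
    congr 1
    ext i
    simp [ivec]
  refine (hasSum_ftrans_lattice_mul_conj hP (memLp_mul_conj hf.hat_memLp hβ.hat_memLp_top)
    (memLp_mul_conj hg.hat_memLp hα.hat_memLp_top)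
    (fun _ => hβ.mem_unitCube_of_mul_conj_ne_zero)
    fun _ => hα.mem_unitCube_of_mul_conj_ne_zero).congr_fun fun k => ?_
  simp only [Function.comp_apply, Equiv.neg_apply]
  rw [ip_tran_eq_ftrans hf hβ.toIsL2FourierPair, ip_tran_eq_ftrans hg hα.toIsL2FourierPair,
    ivec_neg]

lemma IsL2FourierPair.dila_inv (hf : IsL2FourierPair fh f) (hM : IsUnit M.det) :
    IsL2FourierPair (_root_.dila Mᵀ fh) (_root_.dila M⁻¹ f) := by
  simpa [Matrix.transpose_nonsing_inv, Matrix.nonsing_inv_nonsing_inv _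
    (Matrix.isUnit_det_transpose M hM)] using hf.dila (Matrix.isUnit_nonsing_inv_det M hM)

lemma hasSum_ip_dila_tran_mul_conj (hP : IsUnit P.det) (hM : IsUnit M.det)
    (hα : IsBandlimited P a α) (hβ : IsBandlimited P b β) (hf : IsL2FourierPair fh f)
    (hg : IsL2FourierPair gh g) :
    HasSum
      (fun k => ip f (dila M (tran (P *ᵥ ivec k) β)) *
        conj (ip g (dila M (tran (P *ᵥ ivec k) α))))
      (|P.det|⁻¹ • ip (fun ξ => fh ξ * conj (b (Mᵀ⁻¹ *ᵥ ξ)))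
        fun ξ => gh ξ * conj (a (Mᵀ⁻¹ *ᵥ ξ))) := by
  have hMt : IsUnit Mᵀ.det := Matrix.isUnit_det_transpose M hM
  have dila_mul (u c : ℝn n → ℂ) :
      dila Mᵀ (fun ξ => u ξ * conj (c (Mᵀ⁻¹ *ᵥ ξ))) = fun ξ => dila Mᵀ u ξ * conj (c ξ) := by
    ext ξ
    rw [dila, dila, inv_mulVec_mulVec hMt, mul_assoc]
  rw [← ip_dila_dila hMt, dila_mul, dila_mul]
  simp_rw [ip_dila_right hM]
  exact hasSum_ip_tran_mul_conj hP hα hβ (hf.dila_inv hM) (hg.dila_inv hM)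

lemma tsum_enorm_sq_ip_dila_tran (hP : IsUnit P.det) (hM : IsUnit M.det)
    (hα : IsBandlimited P a α) (hf : IsL2FourierPair fh f) :
    ∑' k, ‖ip f (dila M (tran (P *ᵥ ivec k) α))‖ₑ ^ 2 =
      ENNReal.ofReal |P.det|⁻¹ * ∫⁻ ξ, ‖fh ξ * conj (a (Mᵀ⁻¹ *ᵥ ξ))‖ₑ ^ 2 := by
  have hfa := memLp_mul_conj hf.hat_memLp
    (memLp_comp_mulVec hα.hat_memLp_top (isUnit_det_transpose_inv hM))
  have hsum := hasSum_ip_dila_tran_mul_conj hP hM hα hα hf hf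
  rw [ip_self hfa, Complex.real_smul, ← ofReal_mul] at hsum
  rw [tsum_enorm_sq_of_hasSum hsum, ENNReal.ofReal_mul (by positivity), lintegral_enorm_sq hfa]

lemma transpose_zpow_inv (hA : IsUnit A.det) (j : ℤ) : (A ^ j)ᵀ⁻¹ = Aᵀ ^ (-j) := by
  rw [Matrix.transpose_zpow, Matrix.zpow_neg (Matrix.isUnit_det_transpose A hA)]

lemma memLp_waveletSystem (hA : IsUnit A.det) (hα : MemLp α 2 volume) (p : ℤ × (Fin n → ℤ)) :
    MemLp (waveletSystem A P α p) 2 volume :=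
  memLp_dila (hA.det_zpow p.1) (memLp_tran _ hα)

lemma memLp_mul_conj_comp_zpow (hA : IsUnit A.det) (hα : IsBandlimited P a α)
    (hf : MemLp fh 2 volume) (j : ℤ) :
    MemLp (fun ξ => fh ξ * conj (a ((A ^ j)ᵀ⁻¹ *ᵥ ξ))) 2 volume :=
  memLp_mul_conj hf
    (memLp_comp_mulVec hα.hat_memLp_top (isUnit_det_transpose_inv (hA.det_zpow j)))

lemma tsum_lintegral_mul_conj_comp_zpow_le (hA : IsUnit A.det) (hα : IsBandlimited P a α)
    (hK : ∀ᵐ ξ, ∑' j : ℤ, ‖a (Aᵀ ^ j *ᵥ ξ)‖ₑ ^ 2 ≤ ENNReal.ofReal K) (hf : MemLp fh 2 volume) :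
    ∑' j : ℤ, ∫⁻ ξ, ‖fh ξ * conj (a ((A ^ j)ᵀ⁻¹ *ᵥ ξ))‖ₑ ^ 2 ≤
      ENNReal.ofReal K * ∫⁻ ξ, ‖fh ξ‖ₑ ^ 2 := by
  rw [← lintegral_tsum fun j => (memLp_mul_conj_comp_zpow hA hα hf j).1.enorm.pow_const 2,
    ← lintegral_const_mul' _ _ ENNReal.ofReal_ne_top]
  refine lintegral_mono_ae ?_
  filter_upwards [hK] with ξ hξ
  rw [← (Equiv.neg ℤ).tsum_eq] at hξ
  simp_rw [transpose_zpow_inv hA, enorm_mul, RCLike.enorm_conj, mul_pow, ENNReal.tsum_mul_left]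
  rw [mul_comm]
  exact mul_le_mul_left hξ _

theorem isBesselWith_waveletSystem (hA : IsUnit A.det) (hP : IsUnit P.det)
    (hα : IsBandlimited P a α)
    (hK : ∀ᵐ ξ, ∑' j : ℤ, ‖a (Aᵀ ^ j *ᵥ ξ)‖ₑ ^ 2 ≤ ENNReal.ofReal K) :
    IsBesselWith (waveletSystem A P α) (|P.det|⁻¹ * K) := by
  intro f hf
  obtain ⟨fh, hf⟩ := exists_isL2FourierPair hf
  change ∑' p, ‖ip f (waveletSystem A P α p)‖ₑ ^ 2 ≤ _ * ∫⁻ x, ‖f x‖ₑ ^ 2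
  calc ∑' p, ‖ip f (waveletSystem A P α p)‖ₑ ^ 2
      = ENNReal.ofReal |P.det|⁻¹ *
          ∑' j : ℤ, ∫⁻ ξ, ‖fh ξ * conj (a ((A ^ j)ᵀ⁻¹ *ᵥ ξ))‖ₑ ^ 2 := by
        simp only [waveletSystem]
        rw [ENNReal.tsum_prod', ← ENNReal.tsum_mul_left]
        simp_rw [tsum_enorm_sq_ip_dila_tran hP (hA.det_zpow _) hα hf]
    _ ≤ ENNReal.ofReal |P.det|⁻¹ * (ENNReal.ofReal K * ∫⁻ ξ, ‖fh ξ‖ₑ ^ 2) := by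
        gcongr
        exact tsum_lintegral_mul_conj_comp_zpow_le hA hα hK hf.hat_memLp
    _ = ENNReal.ofReal (|P.det|⁻¹ * K) * ∫⁻ x, ‖f x‖ₑ ^ 2 := by
        rw [hf.lintegral_enorm_sq_eq, ENNReal.ofReal_mul (by positivity), mul_assoc]

lemma tsum_ip_eq_integral_tsum {ι : Type*} [Countable ι] {u v : ι → ℝn n → ℂ}
    (hu : ∀ i, MemLp (u i) 2 volume) (hv : ∀ i, MemLp (v i) 2 volume)
    (hu' : ∑' i, ∫⁻ ξ, ‖u i ξ‖ₑ ^ 2 ≠ ⊤) (hv' : ∑' i, ∫⁻ ξ, ‖v i ξ‖ₑ ^ 2 ≠ ⊤) :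
    ∑' i, ip (u i) (v i) = ∫ ξ, ∑' i, u i ξ * conj (v i ξ) := by
  refine (integral_tsum (fun i => (hu i).1.mul (hv i).star.1)
    (ne_top_of_le_ne_top (ENNReal.add_ne_top.2 ⟨hu', hv'⟩) ?_)).symm
  rw [← ENNReal.tsum_add]
  refine ENNReal.tsum_le_tsum fun i => ?_
  rw [← lintegral_add_left' ((hu i).1.enorm.pow_const 2)]
  refine lintegral_mono fun ξ => ?_
  simp only [Pi.mul_apply, Pi.star_apply, enorm_mul, RCLike.star_def, RCLike.enorm_conj]
  rcases le_total ‖u i ξ‖ₑ ‖v i ξ‖ₑ with hle | hle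
  · exact (mul_le_mul_left hle _).trans ((sq _).ge.trans le_add_self)
  · exact (mul_le_mul_right hle _).trans ((sq _).ge.trans le_self_add)

lemma tsum_ip_mul_conj_comp_zpow (hA : IsUnit A.det) (hα : IsBandlimited P a α)
    (hβ : IsBandlimited P b β)
    (hK : ∀ᵐ ξ, ∑' j : ℤ, ‖a (Aᵀ ^ j *ᵥ ξ)‖ₑ ^ 2 ≤ ENNReal.ofReal K)
    (hL : ∀ᵐ ξ, ∑' j : ℤ, ‖b (Aᵀ ^ j *ᵥ ξ)‖ₑ ^ 2 ≤ ENNReal.ofReal L)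
    {c : ℂ} (hab : ∀ᵐ ξ, ∑' j : ℤ, a (Aᵀ ^ j *ᵥ ξ) * conj (b (Aᵀ ^ j *ᵥ ξ)) = c)
    (hf : MemLp fh 2 volume) (hg : MemLp gh 2 volume) :
    ∑' j : ℤ, ip (fun ξ => fh ξ * conj (b ((A ^ j)ᵀ⁻¹ *ᵥ ξ)))
      (fun ξ => gh ξ * conj (a ((A ^ j)ᵀ⁻¹ *ᵥ ξ))) = c * ip fh gh := by
  have hfb := memLp_mul_conj_comp_zpow hA hβ hf
  have hga := memLp_mul_conj_comp_zpow hA hα hg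
  have ne_top {K : ℝ} {u : ℝn n → ℂ} (hu : MemLp u 2 volume) :
      ENNReal.ofReal K * ∫⁻ ξ, ‖u ξ‖ₑ ^ 2 ≠ ⊤ :=
    ENNReal.mul_ne_top ENNReal.ofReal_ne_top (lintegral_enorm_sq hu ▸ ENNReal.ofReal_ne_top)
  rw [tsum_ip_eq_integral_tsum hfb hga
    (ne_top_of_le_ne_top (ne_top hf) (tsum_lintegral_mul_conj_comp_zpow_le hA hβ hL hf))
    (ne_top_of_le_ne_top (ne_top hg) (tsum_lintegral_mul_conj_comp_zpow_le hA hα hK hg)), ip,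
    ← integral_const_mul]
  refine integral_congr_ae ?_
  filter_upwards [hab] with ξ hξ
  rw [← hξ, ← (Equiv.neg ℤ).tsum_eq, ← tsum_mul_right]
  refine tsum_congr fun j => ?_
  rw [Equiv.neg_apply, transpose_zpow_inv hA, neg_neg, map_mul, conj_conj]
  ring

theorem areDualFrames_waveletSystem (hA : IsUnit A.det) (hP : IsUnit P.det)
    (hα : IsBandlimited P a α) (hβ : IsBandlimited P b β)
    (hK : ∀ᵐ ξ, ∑' j : ℤ, ‖a (Aᵀ ^ j *ᵥ ξ)‖ₑ ^ 2 ≤ ENNReal.ofReal K)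
    (hL : ∀ᵐ ξ, ∑' j : ℤ, ‖b (Aᵀ ^ j *ᵥ ξ)‖ₑ ^ 2 ≤ ENNReal.ofReal L)
    (hab : ∀ᵐ ξ, ∑' j : ℤ, a (Aᵀ ^ j *ᵥ ξ) * conj (b (Aᵀ ^ j *ᵥ ξ)) = (|P.det| : ℝ)) :
    AreDualFrames (waveletSystem A P α) (waveletSystem A P β) := by
  have hF := isBesselWith_waveletSystem hA hP hα hK
  have hG := isBesselWith_waveletSystem hA hP hβ hL
  have hF' := memLp_waveletSystem (P := P) hA hα.memLp
  refine ⟨⟨_, hF⟩, ⟨_, hG⟩, reconstructionProp_of_tsum_ip hF hG hF' fun f g hf hg => ?_⟩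
  have hsum := summable_ip_mul_conj_ip hF hG hF' hf hg
  obtain ⟨fh, hf⟩ := exists_isL2FourierPair hf
  obtain ⟨gh, hg⟩ := exists_isL2FourierPair hg
  calc ∑' p, ip f (waveletSystem A P β p) * conj (ip g (waveletSystem A P α p))
      = ∑' j : ℤ, |P.det|⁻¹ • ip (fun ξ => fh ξ * conj (b ((A ^ j)ᵀ⁻¹ *ᵥ ξ)))
          (fun ξ => gh ξ * conj (a ((A ^ j)ᵀ⁻¹ *ᵥ ξ))) := by
        rw [hsum.tsum_prod]
        exact tsum_congr fun j =>
          (hasSum_ip_dila_tran_mul_conj hP (hA.det_zpow j) hα hβ hf hg).tsum_eq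
    _ = |P.det|⁻¹ • ((|P.det| : ℝ) * ip fh gh) := by
        rw [tsum_const_smul'', tsum_ip_mul_conj_comp_zpow hA hα hβ hK hL hab hf.hat_memLp
          hg.hat_memLp]
    _ = ip f g := by
        rw [← Complex.real_smul, smul_smul, inv_mul_cancel₀ (abs_ne_zero.2 hP.ne_zero), one_smul,
          hf.ip_eq_ip_hat hg]

end WaveletSystems

section Telescoping

open Filter

variable {u : ℤ → ℝ} {a b : ℝ}

lemma hasSum_nat_sub_succ {v : ℕ → ℝ} (hv : Antitone v) (hb : Tendsto v atTop (𝓝 b)) :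
    HasSum (fun i => v i - v (i + 1)) (v 0 - b) := by
  rw [hasSum_iff_tendsto_nat_of_nonneg fun i => sub_nonneg.2 (hv i.le_succ)]
  simp_rw [Finset.sum_range_sub']
  exact tendsto_const_nhds.sub hb

lemma hasSum_int_sub_succ (hu : Antitone u) (ha : Tendsto u atBot (𝓝 a))
    (hb : Tendsto u atTop (𝓝 b)) : HasSum (fun j => u j - u (j + 1)) (a - b) := by
  have hright := hasSum_nat_sub_succ (hu.comp_monotone Nat.mono_cast)
    (hb.comp tendsto_natCast_atTop_atTop)
  have hleft := (hasSum_nat_sub_succ (v := fun i => -u (-i))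
    (fun i k hik => neg_le_neg (hu (by simpa using hik)))
    (ha.comp (tendsto_neg_atTop_atBot.comp tendsto_natCast_atTop_atTop)).neg)
  convert HasSum.of_nat_of_neg_add_one (f := fun j => u j - u (j + 1)) hright ?_ using 1
  rotate_left 2
  · convert hleft using 2 with i
    push_cast
    ring_nf
  · simp only [Function.comp_apply, Nat.cast_zero, neg_zero]
    ring

lemma hasSum_int_sub_add_natCast (hu : Antitone u) (ha : Tendsto u atBot (𝓝 a))
    (hb : Tendsto u atTop (𝓝 b)) (m : ℕ) : HasSum (fun j => u j - u (j + m)) (m * (a - b)) := by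
  induction m with
  | zero => simp
  | succ m ih =>
    have hshift := (Equiv.addRight (m : ℤ)).hasSum_iff.2 (hasSum_int_sub_succ hu ha hb)
    convert ih.add hshift using 1
    · ext j
      simp [add_assoc]
    · push_cast
      ring

lemma tsum_enorm_sq_le_of_sq_le_of_hasSum {ι : Type*} {c d : ι → ℝ} {K : ℝ}
    (hcd : ∀ j, c j ^ 2 ≤ d j) (hd : HasSum d K) : ∑' j, ‖(c j : ℂ)‖ₑ ^ 2 ≤ ENNReal.ofReal K := by
  have hd0 (j : ι) : 0 ≤ d j := (sq_nonneg _).trans (hcd j)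
  rw [← hd.tsum_eq, ENNReal.ofReal_tsum_of_nonneg hd0 hd.summable]
  refine ENNReal.tsum_le_tsum fun j => ?_
  rw [← ofReal_norm, ← ENNReal.ofReal_pow (norm_nonneg _), Complex.norm_real, Real.norm_eq_abs,
    sq_abs]
  exact ENNReal.ofReal_le_ofReal (hcd j)

end Telescoping

section Plateau

variable {E : Type*} [NormedAddCommGroup E] {x y : E}

/-- The radial cutoff equal to `1` for `‖x‖ ≤ 1/2`, to `0` for `‖x‖ ≥ 1`, and affine in `‖x‖` in
between. -/
def plateau (x : E) : ℝ := max 0 (min 1 (2 - 2 * ‖x‖))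

lemma plateau_nonneg (x : E) : 0 ≤ plateau x := le_max_left _ _

lemma plateau_le_of_norm_le (h : ‖x‖ ≤ ‖y‖) : plateau y ≤ plateau x := by
  unfold plateau
  gcongr

lemma plateau_eq_one (h : ‖x‖ ≤ 1 / 2) : plateau x = 1 := by
  rw [plateau, min_eq_left (by linarith), max_eq_right zero_le_one]

lemma plateau_eq_zero (h : 1 ≤ ‖x‖) : plateau x = 0 :=
  max_eq_left ((min_le_right _ _).trans (by linarith))

lemma plateau_eq_two_sub (h : 1 / 2 ≤ ‖x‖) (h' : ‖x‖ ≤ 1) : plateau x = 2 - 2 * ‖x‖ := by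
  rw [plateau, min_eq_right (by linarith), max_eq_right (by linarith)]

lemma plateau_cases (x : E) :
    (‖x‖ ≤ 1 / 2 ∧ plateau x = 1) ∨ (1 / 2 ≤ ‖x‖ ∧ ‖x‖ ≤ 1 ∧ plateau x = 2 - 2 * ‖x‖) ∨
      (1 < ‖x‖ ∧ plateau x = 0) := by
  rcases le_total ‖x‖ (1 / 2) with h | h
  · exact .inl ⟨h, plateau_eq_one h⟩
  rcases le_or_gt ‖x‖ 1 with h' | h'
  · exact .inr (.inl ⟨h, h', plateau_eq_two_sub h h'⟩)
  · exact .inr (.inr ⟨h', plateau_eq_zero h'.le⟩)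

lemma continuous_plateau : Continuous (plateau : E → ℝ) := by
  unfold plateau
  fun_prop

end Plateau

section Windows

open scoped Matrix

variable {n : ℕ} {A : Matrix (Fin n) (Fin n) ℝ} {a α f fh : ℝn n → ℂ}

lemma memLp_of_continuous_of_one_le_norm (ha : Continuous a) (h0 : ∀ ξ, 1 ≤ ‖ξ‖ → a ξ = 0)
    (p : ℝ≥0∞) : MemLp a p :=
  ha.memLp_of_hasCompactSupport <| .of_support_subset_isCompact
    (isCompact_closedBall (0 : ℝn n) 1) fun ξ hξ =>
      mem_closedBall_zero_iff.2 (not_le.1 fun h => hξ (h0 ξ h)).le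

lemma isBandlimited_half_smul_one (hα : IsL2FourierPair a α) (ha : Continuous a)
    (h0 : ∀ ξ, 1 ≤ ‖ξ‖ → a ξ = 0) : IsBandlimited ((2⁻¹ : ℝ) • 1) a α := by
  refine ⟨hα, memLp_of_continuous_of_one_le_norm ha h0 ⊤, fun ξ hξ i => ?_⟩
  have hi := abs_lt.1 ((norm_le_pi_norm ξ i).trans_lt (not_le.1 fun h => hξ (h0 ξ h)))
  rw [Matrix.transpose_smul, Matrix.transpose_one, Matrix.smul_mulVec, Matrix.one_mulVec,
    Pi.smul_apply, smul_eq_mul]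
  constructor <;> linarith

lemma det_zpow (A : Matrix (Fin n) (Fin n) ℝ) (j : ℤ) : (A ^ j).det = A.det ^ j := by
  cases j with
  | ofNat m => simp
  | negSucc m => rw [zpow_negSucc, zpow_negSucc, Matrix.det_nonsing_inv, Matrix.det_pow,
      Ring.inverse_eq_inv']

lemma IsL2FourierPair.comp_zpow_mulVec (h : IsL2FourierPair fh f) (hA : IsUnit A.det) (j : ℤ) :
    IsL2FourierPair (fun ξ => (|A.det| ^ (-j) : ℝ) * fh (Aᵀ ^ (-j) *ᵥ ξ))
      fun x => f (A ^ j *ᵥ x) := by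
  simpa only [det_zpow, abs_zpow, ← zpow_neg, transpose_zpow_inv hA] using
    h.comp_mulVec (hA.det_zpow j)

end Windows

section Quincunx

open scoped Matrix
open Filter

/-- The quincunx dilation matrix, a rotation by `π/4` scaled by `√2`. -/
def quincunx : Matrix (Fin 2) (Fin 2) ℝ := !![1, -1; 1, 1]

lemma det_quincunx : quincunx.det = 2 := by
  rw [quincunx, Matrix.det_fin_two_of]
  norm_num

lemma isUnit_det_quincunx : IsUnit quincunx.det :=
  isUnit_iff_ne_zero.2 (by rw [det_quincunx]; norm_num)

lemma det_half_smul_one : ((2⁻¹ : ℝ) • (1 : Matrix (Fin 2) (Fin 2) ℝ)).det = 1 / 4 := by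
  rw [Matrix.det_smul, Matrix.det_one, Fintype.card_fin]
  norm_num

lemma isUnit_det_quincunx_transpose : IsUnit quincunxᵀ.det :=
  Matrix.isUnit_det_transpose _ isUnit_det_quincunx

lemma quincunx_transpose_mulVec (ξ : ℝn 2) :
    quincunxᵀ *ᵥ ξ = ![ξ 0 + ξ 1, -ξ 0 + ξ 1] := by
  ext i
  fin_cases i <;> simp [quincunx, Matrix.mulVec, dotProduct]

lemma norm_fin_two (ξ : ℝn 2) : ‖ξ‖ = max |ξ 0| |ξ 1| := by
  refine le_antisymm ((pi_norm_le_iff_of_nonneg (by positivity)).2 fun i => ?_)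
    (max_le (norm_le_pi_norm ξ 0) (norm_le_pi_norm ξ 1))
  fin_cases i
  exacts [le_max_left _ _, le_max_right _ _]

lemma norm_quincunx_transpose_mulVec (ξ : ℝn 2) : ‖quincunxᵀ *ᵥ ξ‖ = |ξ 0| + |ξ 1| := by
  rw [norm_fin_two, quincunx_transpose_mulVec]
  simp only [Matrix.cons_val_zero, Matrix.cons_val_one]
  grind

lemma norm_le_norm_quincunx_transpose_mulVec (ξ : ℝn 2) : ‖ξ‖ ≤ ‖quincunxᵀ *ᵥ ξ‖ := by
  rw [norm_quincunx_transpose_mulVec, norm_fin_two]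
  exact max_le (le_add_of_nonneg_right (abs_nonneg _)) (le_add_of_nonneg_left (abs_nonneg _))

lemma norm_quincunx_transpose_mulVec_mulVec (ξ : ℝn 2) :
    ‖quincunxᵀ *ᵥ (quincunxᵀ *ᵥ ξ)‖ = 2 * ‖ξ‖ := by
  rw [norm_quincunx_transpose_mulVec, quincunx_transpose_mulVec, norm_fin_two]
  simp only [Matrix.cons_val_zero, Matrix.cons_val_one]
  grind

lemma quincunx_transpose_zpow_add_one_mulVec (j : ℤ) (ξ : ℝn 2) :
    quincunxᵀ ^ (j + 1) *ᵥ ξ = quincunxᵀ *ᵥ (quincunxᵀ ^ j *ᵥ ξ) := by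
  rw [add_comm, Matrix.zpow_one_add isUnit_det_quincunx_transpose, Matrix.mulVec_mulVec]

lemma monotone_norm_quincunx_transpose_zpow_mulVec (ξ : ℝn 2) :
    Monotone fun j : ℤ => ‖quincunxᵀ ^ j *ᵥ ξ‖ :=
  monotone_int_of_le_succ fun j => by
    rw [quincunx_transpose_zpow_add_one_mulVec]
    exact norm_le_norm_quincunx_transpose_mulVec _

lemma norm_quincunx_transpose_zpow_two_mul_mulVec (m : ℤ) (ξ : ℝn 2) :
    ‖quincunxᵀ ^ (2 * m) *ᵥ ξ‖ = 2 ^ m * ‖ξ‖ := by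
  have hstep (k : ℤ) : ‖quincunxᵀ ^ (2 * (k + 1)) *ᵥ ξ‖ = 2 * ‖quincunxᵀ ^ (2 * k) *ᵥ ξ‖ := by
    rw [show 2 * (k + 1) = 2 * k + 1 + 1 by ring, quincunx_transpose_zpow_add_one_mulVec,
      quincunx_transpose_zpow_add_one_mulVec, norm_quincunx_transpose_mulVec_mulVec]
  induction m with
  | zero => simp
  | succ k ih => rw [hstep, ih, zpow_add_one₀ two_ne_zero]; ring
  | pred k ih =>
    have hk := hstep (-k - 1)
    rw [sub_add_cancel, ih] at hk
    rw [zpow_sub_one₀ two_ne_zero]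
    linarith

lemma eventually_atBot_norm_quincunx_transpose_zpow_mulVec_le (ξ : ℝn 2) {ε : ℝ} (hε : 0 < ε) :
    ∀ᶠ j : ℤ in atBot, ‖quincunxᵀ ^ j *ᵥ ξ‖ ≤ ε := by
  obtain ⟨m, hm⟩ := pow_unbounded_of_one_lt (‖ξ‖ / ε) one_lt_two
  filter_upwards [eventually_le_atBot (2 * -(m : ℤ))] with j hj
  refine (monotone_norm_quincunx_transpose_zpow_mulVec ξ hj).trans ?_
  dsimp only
  rw [norm_quincunx_transpose_zpow_two_mul_mulVec, zpow_neg, zpow_natCast,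
    inv_mul_le_iff₀ (by positivity)]
  exact ((div_lt_iff₀ hε).1 hm).le

lemma eventually_atTop_le_norm_quincunx_transpose_zpow_mulVec {ξ : ℝn 2} (hξ : ξ ≠ 0) (R : ℝ) :
    ∀ᶠ j : ℤ in atTop, R ≤ ‖quincunxᵀ ^ j *ᵥ ξ‖ := by
  obtain ⟨m, hm⟩ := pow_unbounded_of_one_lt (R / ‖ξ‖) one_lt_two
  filter_upwards [eventually_ge_atTop (2 * (m : ℤ))] with j hj
  refine le_trans ?_ (monotone_norm_quincunx_transpose_zpow_mulVec ξ hj)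
  dsimp only
  rw [norm_quincunx_transpose_zpow_two_mul_mulVec, zpow_natCast]
  exact ((div_lt_iff₀ (norm_pos_iff.2 hξ)).1 hm).le

lemma hasSum_plateau_sq_sub {ξ : ℝn 2} (hξ : ξ ≠ 0) (m : ℕ) :
    HasSum (fun j : ℤ => plateau (quincunxᵀ ^ j *ᵥ ξ) ^ 2 -
      plateau (quincunxᵀ ^ (j + m) *ᵥ ξ) ^ 2) m := by
  have h := hasSum_int_sub_add_natCast (u := fun j => plateau (quincunxᵀ ^ j *ᵥ ξ) ^ 2)
    (a := 1) (b := 0) (fun i j hij => ?_) ?_ ?_ m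
  · simpa using h
  · exact pow_le_pow_left₀ (plateau_nonneg _)
      (plateau_le_of_norm_le (monotone_norm_quincunx_transpose_zpow_mulVec ξ hij)) 2
  · refine tendsto_const_nhds.congr' ?_
    filter_upwards [eventually_atBot_norm_quincunx_transpose_zpow_mulVec_le ξ one_half_pos]
      with j hj
    rw [plateau_eq_one hj, one_pow]
  · refine tendsto_const_nhds.congr' ?_
    filter_upwards [eventually_atTop_le_norm_quincunx_transpose_zpow_mulVec hξ 1] with j hj
    rw [plateau_eq_zero hj, zero_pow two_ne_zero]

end Quincunx

section QuincunxGenerators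

open scoped Matrix

variable {ψ : ℝn 2 → ℂ} {ξ : ℝn 2}

lemma plateau_quincunx_transpose_le (ξ : ℝn 2) : plateau (quincunxᵀ *ᵥ ξ) ≤ plateau ξ :=
  plateau_le_of_norm_le (norm_le_norm_quincunx_transpose_mulVec ξ)

lemma quincunxPsiHat_eq (ξ : ℝn 2) :
    quincunxPsiHat ξ = plateau ξ - plateau (quincunxᵀ *ᵥ ξ) := by
  have hmax := plateau_cases ξ
  have hadd := plateau_cases (quincunxᵀ *ᵥ ξ)
  rw [norm_fin_two] at hmax
  rw [norm_quincunx_transpose_mulVec] at hadd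
  have h0 := abs_nonneg (ξ 0)
  have h1 := abs_nonneg (ξ 1)
  unfold quincunxPsiHat tentG
  rcases le_total |ξ 0| |ξ 1| with hle | hle
  · rw [max_eq_right hle] at hmax
    split_ifs <;> grind
  · rw [max_eq_left hle] at hmax
    split_ifs <;> grind

/-- The Fourier transform of the dual generator
`φ = (1/4)ψ + (1/4)ψ(A⁻¹·) + (1/8)ψ(A⁻²·)`. -/
def quincunxPhiHat (ξ : ℝn 2) : ℝ :=
  1 / 4 * quincunxPsiHat ξ + 1 / 2 * quincunxPsiHat (quincunxᵀ *ᵥ ξ) +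
    1 / 2 * quincunxPsiHat (quincunxᵀ *ᵥ (quincunxᵀ *ᵥ ξ))

lemma quincunxPhiHat_eq (ξ : ℝn 2) :
    quincunxPhiHat ξ = 1 / 4 * plateau ξ + 1 / 4 * plateau (quincunxᵀ *ᵥ ξ) -
      1 / 2 * plateau (quincunxᵀ *ᵥ (quincunxᵀ *ᵥ (quincunxᵀ *ᵥ ξ))) := by
  simp_rw [quincunxPhiHat, quincunxPsiHat_eq]
  ring

lemma isL2FourierPair_quincunxPhiHat
    (hψ : IsL2FourierPair (fun ξ => (quincunxPsiHat ξ : ℂ)) ψ) :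
    IsL2FourierPair (fun ξ => (quincunxPhiHat ξ : ℂ)) fun x => (1 / 4 : ℂ) * ψ x +
      (1 / 4 : ℂ) * ψ (quincunx ^ (-1 : ℤ) *ᵥ x) + (1 / 8 : ℂ) * ψ (quincunx ^ (-2 : ℤ) *ᵥ x) := by
  have hpair (j : ℤ) := hψ.comp_zpow_mulVec isUnit_det_quincunx j
  convert ((hψ.const_mul (1 / 4)).add ((hpair (-1)).const_mul (1 / 4))).add
    ((hpair (-2)).const_mul (1 / 8)) using 2 with ξ
  have hsq : quincunxᵀ ^ (2 : ℤ) *ᵥ ξ = quincunxᵀ *ᵥ (quincunxᵀ *ᵥ ξ) := by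
    rw [show (2 : ℤ) = 1 + 1 from rfl, quincunx_transpose_zpow_add_one_mulVec, zpow_one]
  rw [det_quincunx, neg_neg, neg_neg, zpow_one, zpow_one, hsq, abs_two, quincunxPhiHat]
  push_cast
  ring

lemma continuous_quincunxPsiHat : Continuous quincunxPsiHat := by
  rw [funext quincunxPsiHat_eq]
  exact continuous_plateau.sub (continuous_plateau.comp (by fun_prop))

lemma continuous_quincunxPhiHat : Continuous quincunxPhiHat := by
  have := continuous_quincunxPsiHat
  unfold quincunxPhiHat
  fun_prop

lemma quincunxPsiHat_eq_zero (h : 1 ≤ ‖ξ‖) : quincunxPsiHat ξ = 0 := by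
  rw [quincunxPsiHat_eq, plateau_eq_zero h,
    plateau_eq_zero (h.trans (norm_le_norm_quincunx_transpose_mulVec ξ)), sub_zero]

lemma quincunxPhiHat_eq_zero (h : 1 ≤ ‖ξ‖) : quincunxPhiHat ξ = 0 := by
  have h' := h.trans (norm_le_norm_quincunx_transpose_mulVec ξ)
  rw [quincunxPhiHat, quincunxPsiHat_eq_zero h, quincunxPsiHat_eq_zero h',
    quincunxPsiHat_eq_zero (h'.trans (norm_le_norm_quincunx_transpose_mulVec _))]
  ring

lemma quincunxPsiHat_sq_le (ξ : ℝn 2) :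
    quincunxPsiHat ξ ^ 2 ≤ plateau ξ ^ 2 - plateau (quincunxᵀ *ᵥ ξ) ^ 2 := by
  have hle := plateau_quincunx_transpose_le ξ
  have hnonneg := plateau_nonneg (quincunxᵀ *ᵥ ξ)
  rw [quincunxPsiHat_eq]
  nlinarith

lemma quincunxPhiHat_sq_le (ξ : ℝn 2) :
    quincunxPhiHat ξ ^ 2 ≤ plateau ξ ^ 2 -
      plateau (quincunxᵀ *ᵥ (quincunxᵀ *ᵥ (quincunxᵀ *ᵥ ξ))) ^ 2 := by
  have hle₁ := plateau_quincunx_transpose_le ξ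
  have hle₂ := plateau_quincunx_transpose_le (quincunxᵀ *ᵥ ξ)
  have hle₃ := plateau_quincunx_transpose_le (quincunxᵀ *ᵥ (quincunxᵀ *ᵥ ξ))
  have hnonneg := plateau_nonneg (quincunxᵀ *ᵥ (quincunxᵀ *ᵥ (quincunxᵀ *ᵥ ξ)))
  rw [quincunxPhiHat_eq]
  nlinarith

lemma quincunxPsiHat_mul_quincunxPhiHat (ξ : ℝn 2) :
    quincunxPsiHat ξ * quincunxPhiHat ξ =
      1 / 4 * (plateau ξ ^ 2 - plateau (quincunxᵀ *ᵥ ξ) ^ 2) := by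
  rw [quincunxPsiHat_eq, quincunxPhiHat_eq]
  -- Either `B ξ`, and a fortiori `ξ`, lies where the plateau is `1`, or `‖B³ξ‖ = 2 ‖Bξ‖ > 1`.
  rcases le_or_gt ‖quincunxᵀ *ᵥ ξ‖ (1 / 2) with h | h
  · rw [plateau_eq_one h, plateau_eq_one ((norm_le_norm_quincunx_transpose_mulVec ξ).trans h)]
    ring
  · rw [plateau_eq_zero (x := quincunxᵀ *ᵥ (quincunxᵀ *ᵥ (quincunxᵀ *ᵥ ξ)))
      (by rw [norm_quincunx_transpose_mulVec_mulVec]; linarith)]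
    ring

lemma tsum_enorm_sq_quincunxPsiHat_le (hξ : ξ ≠ 0) :
    ∑' j : ℤ, ‖(quincunxPsiHat (quincunxᵀ ^ j *ᵥ ξ) : ℂ)‖ₑ ^ 2 ≤ ENNReal.ofReal 1 := by
  refine tsum_enorm_sq_le_of_sq_le_of_hasSum (fun j => quincunxPsiHat_sq_le _) ?_
  simp_rw [← quincunx_transpose_zpow_add_one_mulVec]
  exact_mod_cast hasSum_plateau_sq_sub hξ 1

lemma tsum_enorm_sq_quincunxPhiHat_le (hξ : ξ ≠ 0) :
    ∑' j : ℤ, ‖(quincunxPhiHat (quincunxᵀ ^ j *ᵥ ξ) : ℂ)‖ₑ ^ 2 ≤ ENNReal.ofReal 3 := by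
  refine tsum_enorm_sq_le_of_sq_le_of_hasSum (fun j => quincunxPhiHat_sq_le _) ?_
  simp_rw [← quincunx_transpose_zpow_add_one_mulVec, add_assoc]
  exact_mod_cast hasSum_plateau_sq_sub hξ 3

lemma tsum_quincunxPsiHat_mul_quincunxPhiHat (hξ : ξ ≠ 0) :
    ∑' j : ℤ, (quincunxPsiHat (quincunxᵀ ^ j *ᵥ ξ) : ℂ) *
      conj (quincunxPhiHat (quincunxᵀ ^ j *ᵥ ξ) : ℂ) = (1 / 4 : ℝ) := by
  simp_rw [conj_ofReal, ← ofReal_mul, ← ofReal_tsum, quincunxPsiHat_mul_quincunxPhiHat,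
    ← quincunx_transpose_zpow_add_one_mulVec]
  have hsum := (hasSum_plateau_sq_sub hξ 1).mul_left (1 / 4)
  simp only [Nat.cast_one, mul_one] at hsum
  rw [hsum.tsum_eq]

lemma isL2FourierPair_quincunxPsiHat (hψ : MemLp ψ 2)
    (hhat : IsFourierPair (fun ξ => (quincunxPsiHat ξ : ℂ)) ψ) :
    IsL2FourierPair (fun ξ => (quincunxPsiHat ξ : ℂ)) ψ where
  memLp := hψ
  hat_memLp := memLp_of_continuous_of_one_le_norm
    (continuous_ofReal.comp continuous_quincunxPsiHat)
    (fun _ h => ofReal_eq_zero.2 (quincunxPsiHat_eq_zero h)) 2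
  isFourierPair := hhat

lemma isBandlimited_quincunxPsiHat (hψ : IsL2FourierPair (fun ξ => (quincunxPsiHat ξ : ℂ)) ψ) :
    IsBandlimited ((2⁻¹ : ℝ) • 1) (fun ξ => (quincunxPsiHat ξ : ℂ)) ψ :=
  isBandlimited_half_smul_one hψ (continuous_ofReal.comp continuous_quincunxPsiHat)
    fun _ h => ofReal_eq_zero.2 (quincunxPsiHat_eq_zero h)

lemma isBandlimited_quincunxPhiHat {φ : ℝn 2 → ℂ}
    (hφ : IsL2FourierPair (fun ξ => (quincunxPhiHat ξ : ℂ)) φ) :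
    IsBandlimited ((2⁻¹ : ℝ) • 1) (fun ξ => (quincunxPhiHat ξ : ℂ)) φ :=
  isBandlimited_half_smul_one hφ (continuous_ofReal.comp continuous_quincunxPhiHat)
    fun _ h => ofReal_eq_zero.2 (quincunxPhiHat_eq_zero h)

end QuincunxGenerators

open Matrix in
/-- Example 2.6: for the quincunx matrix `A`, the bandlimited generator
`ψ` (with `ψ̂(ξ) = g(|ξ₁|,|ξ₂|)`) and `φ = (1/4)ψ + (1/4)ψ(A⁻¹·) + (1/8)ψ(A⁻²·)` generate
dual wavelet frames over the translation lattice `(1/2)ℤ²`. -/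
theorem quincunx_dual_wavelet_frames
    (A : Matrix (Fin 2) (Fin 2) ℝ) (hA : A = !![1, -1; 1, 1])
    (ψ : ℝn 2 → ℂ) (hψ : MemLp ψ 2 volume)
    (hhat : IsFourierPair (fun ξ => (quincunxPsiHat ξ : ℂ)) ψ)
    (φ : ℝn 2 → ℂ)
    (hφ : φ = fun x => (1 / 4 : ℂ) * ψ x + (1 / 4 : ℂ) * ψ ((A ^ (-1 : ℤ)).mulVec x) +
      (1 / 8 : ℂ) * ψ ((A ^ (-2 : ℤ)).mulVec x)) :
    AreDualFrames (waveletSystem A ((2⁻¹ : ℝ) • 1) ψ)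
      (waveletSystem A ((2⁻¹ : ℝ) • 1) φ) := by
  obtain rfl : A = quincunx := hA
  subst hφ
  have hψ' := isL2FourierPair_quincunxPsiHat hψ hhat
  refine areDualFrames_waveletSystem isUnit_det_quincunx (isUnit_iff_ne_zero.2 ?_)
    (isBandlimited_quincunxPsiHat hψ')
    (isBandlimited_quincunxPhiHat (isL2FourierPair_quincunxPhiHat hψ')) (K := 1) (L := 3) ?_ ?_ ?_
  · rw [det_half_smul_one]
    norm_num
  · filter_upwards [Measure.ae_ne volume 0] with ξ hξ using tsum_enorm_sq_quincunxPsiHat_le hξ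
  · filter_upwards [Measure.ae_ne volume 0] with ξ hξ using tsum_enorm_sq_quincunxPhiHat_le hξ
  · filter_upwards [Measure.ae_ne volume 0] with ξ hξ
    rw [tsum_quincunxPsiHat_mul_quincunxPhiHat hξ, det_half_smul_one]
    norm_num

end
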